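/- arXiv:1812.11299 — 2 statements merged into one kernel-verified Lean document; each statement's English description precedes it below -/
import Mathlib

section
/- Let (p_n)_{n≥1} be an R-Schauder decomposition of a complex Banach space X. Let (c_n)_{n≥1} be a nondecreasing sequence of real numbers with 0 < c_n < 1 for all n, and let T = M_c ∈ B(X) be the associated multiplier operator. Then both sets {T^n : n ≥ 0} and {n T^n (I − T) : n ≥ 1} are R-bounded, i.e. T is an R-Ritt operator. -/
open Filter Topology NormedSpace

/-- Average over all sign vectors `(ε_1,…,ε_k) ∈ {−1,1}^k` of `‖∑_j ε_j v_j‖`. -/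
noncomputable def signAvg {X : Type*} [NormedAddCommGroup X] [NormedSpace ℂ X]
    (k : ℕ) (v : Fin k → X) : ℝ :=
  (2 ^ k : ℝ)⁻¹ * ∑ ε : Fin k → Bool, ‖∑ j : Fin k, (if ε j then (1 : ℝ) else -1) • v j‖

/-- A set of bounded operators on `X` is `R`-bounded. -/
def IsRBounded {X : Type*} [NormedAddCommGroup X] [NormedSpace ℂ X]
    (F : Set (X →L[ℂ] X)) : Prop :=
  ∃ C : ℝ, 0 ≤ C ∧ ∀ (k : ℕ) (T : Fin k → X →L[ℂ] X) (x : Fin k → X),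
    (∀ j, T j ∈ F) → signAvg k (fun j => (T j) (x j)) ≤ C * signAvg k x

/-- `(p n)` is a Schauder decomposition of `X`: the `p n` are pairwise "orthogonal"
bounded projections whose partial sums converge pointwise to the identity.
(Indexing starts at `0`, corresponding to `n = 1` in the classical notation.) -/
def IsSchauderDecomposition {X : Type*} [NormedAddCommGroup X] [NormedSpace ℂ X]
    (p : ℕ → X →L[ℂ] X) : Prop :=
  (∀ n, (p n).comp (p n) = p n) ∧
  (∀ m n, m ≠ n → (p m).comp (p n) = 0) ∧
  (∀ x : X, Tendsto (fun N => ∑ n ∈ Finset.range N, p n x) atTop (nhds x))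

/-- The partial sum projection `P_N = ∑_{n<N} p_n`. -/
noncomputable def partialSum {X : Type*} [NormedAddCommGroup X] [NormedSpace ℂ X]
    (p : ℕ → X →L[ℂ] X) (N : ℕ) : X →L[ℂ] X :=
  ∑ n ∈ Finset.range N, p n

/-!
Summation by parts writes `∑_{n ≤ N} u_n p_n x` as
`u_N P_N x - ∑_{i < N} (u_{i+1} - u_i) P_i x`, a combination of partial sums whose coefficients
have total mass `|u_N| + ∑_{i < N} |u_{i+1} - u_i|`. Passing to the closed absolutely convex
hull in the strong operator topology preserves `R`-boundedness, so multipliers whose sequences are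
uniformly bounded in the bounded variation norm form an `R`-bounded set.

For `T ^ n` the sequence `c ^ n` is monotone in `[0, 1]`. For `n T ^ n (I - T)` one uses
`n t ^ n (1 - t) = ((n + 1) t ^ n - n t ^ (n + 1)) - t ^ n`, a difference of two increasing
functions from `[0, 1]` to `[0, 1]`, so its variation along `c` is bounded independently of `n`.
-/

section

open Set
open scoped Pointwise

variable {X : Type*} [NormedAddCommGroup X] [NormedSpace ℂ X]

lemma signAvg_add_le (k : ℕ) (v w : Fin k → X) :
    signAvg k (v + w) ≤ signAvg k v + signAvg k w := by
  simp only [signAvg, ← mul_add, ← Finset.sum_add_distrib (s := Finset.univ (α := Fin k → Bool)),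
    Pi.add_apply, smul_add]
  gcongr with ε
  rw [Finset.sum_add_distrib]
  exact norm_add_le _ _

lemma signAvg_smul (k : ℕ) (a : ℝ) (v : Fin k → X) : signAvg k (a • v) = |a| * signAvg k v := by
  simp only [signAvg, Pi.smul_apply, smul_comm _ a, ← Finset.smul_sum, norm_smul, Real.norm_eq_abs,
    ← Finset.mul_sum]
  ring

lemma convexOn_signAvg (k : ℕ) : ConvexOn ℝ univ (signAvg k : (Fin k → X) → ℝ) := by
  refine ⟨convex_univ, fun v _ w _ a b ha hb _ => (signAvg_add_le k _ _).trans_eq ?_⟩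
  rw [signAvg_smul, signAvg_smul, abs_of_nonneg ha, abs_of_nonneg hb, smul_eq_mul, smul_eq_mul]

lemma continuous_signAvg (k : ℕ) : Continuous (signAvg k : (Fin k → X) → ℝ) := by
  unfold signAvg
  fun_prop

lemma signAvg_eq_of_eq_or_eq_neg {k : ℕ} {v w : Fin k → X} (h : ∀ j, w j = v j ∨ w j = -v j) :
    signAvg k w = signAvg k v := by
  have sign_exists (j : Fin k) : ∃ s : Bool, w j = if s then -v j else v j :=
    (h j).elim (fun h => ⟨false, h⟩) fun h => ⟨true, h⟩
  choose s hs using sign_exists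
  have flip_involutive : Function.Involutive fun (ε : Fin k → Bool) j => xor (ε j) (s j) :=
    fun ε => by simp
  unfold signAvg
  congr 1
  refine Fintype.sum_equiv flip_involutive.toPerm _ _ fun ε => ?_
  congr! 2 with j
  rw [hs j]
  cases hε : ε j <;> cases hsj : s j <;> simp [hε, hsj]

lemma signAvg_le_of_mem_closedAbsConvexHull {k : ℕ} {D : Fin k → Set X} {B : ℝ}
    (hD : ∀ v : Fin k → X, (∀ j, v j ∈ D j) → signAvg k v ≤ B) {v : Fin k → X}
    (hv : ∀ j, v j ∈ closedAbsConvexHull ℝ (D j)) : signAvg k v ≤ B := by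
  have signed_subset : univ.pi (fun j => D j ∪ -D j) ⊆ {w | signAvg k w ≤ B} := by
    intro w hw
    have eq_or_eq_neg (j : Fin k) : ∃ y ∈ D j, w j = y ∨ w j = -y :=
      (hw j (mem_univ j)).elim (fun h => ⟨w j, h, .inl rfl⟩)
        fun h => ⟨-w j, h, .inr (neg_neg _).symm⟩
    choose y hyD hwy using eq_or_eq_neg
    exact (signAvg_eq_of_eq_or_eq_neg hwy).trans_le (hD y hyD)
  have sublevel_convex : Convex ℝ {w : Fin k → X | signAvg k w ≤ B} := by
    simpa using (convexOn_signAvg k).convex_le B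
  have hull_subset := closure_minimal (convexHull_min signed_subset sublevel_convex)
    (isClosed_le (continuous_signAvg k) continuous_const)
  -- Closures and convex hulls commute with products, and over `ℝ` the absolutely convex hull is the
  -- convex hull of `D ∪ -D`.
  simp only [convexHull_pi, closure_pi_set, convexHull_union_neg_eq_absConvexHull,
    ← closedAbsConvexHull_eq_closure_absConvexHull] at hull_subset
  exact hull_subset fun j _ => hv j

lemma IsRBounded.mono {F G : Set (X →L[ℂ] X)} (hG : IsRBounded G) (hFG : F ⊆ G) :
    IsRBounded F := by
  obtain ⟨C, hC, hle⟩ := hG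
  exact ⟨C, hC, fun k T x hT => hle k T x fun j => hFG (hT j)⟩

lemma IsRBounded.of_mem_smul_closedAbsConvexHull {F G : Set (X →L[ℂ] X)} (hF : IsRBounded F)
    (B : ℝ) (hG : ∀ S ∈ G, ∀ x, S x ∈ B • closedAbsConvexHull ℝ ((fun T => T x) '' F)) :
    IsRBounded G := by
  obtain ⟨C, hC, hle⟩ := hF
  refine ⟨|B| * C, by positivity, fun k S x hS => ?_⟩
  choose y hy hSy using fun j => mem_smul_set.1 (hG (S j) (hS j) (x j))
  have signAvg_y_le : signAvg k y ≤ C * signAvg k x := by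
    refine signAvg_le_of_mem_closedAbsConvexHull (fun v hv => ?_) hy
    choose T hTF hTv using hv
    simpa only [hTv] using hle k T x hTF
  calc signAvg k (fun j => S j (x j)) = signAvg k (B • y) := by simp only [← hSy, Pi.smul_def]
    _ = |B| * signAvg k y := signAvg_smul k B y
    _ ≤ |B| * (C * signAvg k x) := by gcongr
    _ = |B| * C * signAvg k x := (mul_assoc _ _ _).symm

section AbsConvex

variable {E : Type*} [AddCommGroup E] [Module ℝ E] {H : Set E}

lemma smul_mem_abs_smul (hH : Balanced ℝ H) (a : ℝ) {y : E} (hy : y ∈ H) : a • y ∈ |a| • H :=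
  hH.smul_mono (by simp) (smul_mem_smul_set hy)

lemma sum_smul_mem_sum_abs_smul (hH : AbsConvex ℝ H) (hne : H.Nonempty) {ι : Type*} (s : Finset ι)
    (a : ι → ℝ) {y : ι → E} (hy : ∀ i ∈ s, y i ∈ H) :
    ∑ i ∈ s, a i • y i ∈ (∑ i ∈ s, |a i|) • H := by
  classical
  induction s using Finset.induction_on with
  | empty => simp [zero_smul_set hne]
  | insert i s hi ih =>
    rw [Finset.sum_insert hi, Finset.sum_insert hi,
      hH.2.add_smul (abs_nonneg _) (Finset.sum_nonneg fun _ _ => abs_nonneg _)]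
    exact add_mem_add (smul_mem_abs_smul hH.1 _ (hy i (Finset.mem_insert_self i s)))
      (ih fun j hj => hy j (Finset.mem_insert_of_mem hj))

/-- The bounded variation norm of `u` truncated at index `N`, with the final value in place of the
initial one, since this is the total mass of the coefficients in summation by parts. -/
def bvNorm (u : ℕ → ℝ) (N : ℕ) : ℝ :=
  |u N| + ∑ i ∈ Finset.range N, |u (i + 1) - u i|

lemma sum_smul_mem_bvNorm_smul (hH : AbsConvex ℝ H) {q : ℕ → E}
    (hq : ∀ N, ∑ n ∈ Finset.range (N + 1), q n ∈ H) (u : ℕ → ℝ) (N : ℕ) :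
    ∑ n ∈ Finset.range (N + 1), u n • q n ∈ bvNorm u N • H := by
  rw [Finset.sum_range_by_parts, Nat.add_sub_cancel, sub_eq_add_neg, ← Finset.sum_neg_distrib,
    bvNorm, hH.2.add_smul (abs_nonneg _) (Finset.sum_nonneg fun _ _ => abs_nonneg _)]
  refine add_mem_add (smul_mem_abs_smul hH.1 _ (hq N)) ?_
  simpa only [neg_smul, abs_neg] using
    sum_smul_mem_sum_abs_smul hH ⟨_, hq 0⟩ (Finset.range N) (fun i => -(u (i + 1) - u i))
      fun i _ => hq i

end AbsConvex

lemma bvNorm_sub_le (u w : ℕ → ℝ) (N : ℕ) : bvNorm (u - w) N ≤ bvNorm u N + bvNorm w N := by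
  have increments_le : ∑ i ∈ Finset.range N, |(u - w) (i + 1) - (u - w) i| ≤
      ∑ i ∈ Finset.range N, |u (i + 1) - u i| + ∑ i ∈ Finset.range N, |w (i + 1) - w i| := by
    rw [← Finset.sum_add_distrib]
    refine Finset.sum_le_sum fun i _ => ?_
    rw [Pi.sub_apply, Pi.sub_apply, sub_sub_sub_comm]
    exact abs_sub _ _
  have last_le : |(u - w) N| ≤ |u N| + |w N| := abs_sub _ _
  unfold bvNorm
  linarith

lemma bvNorm_le_of_monotone {u : ℕ → ℝ} (hu : Monotone u) (h0 : 0 ≤ u 0) (N : ℕ) :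
    bvNorm u N ≤ 2 * u N := by
  have increments_eq : ∑ i ∈ Finset.range N, |u (i + 1) - u i| = u N - u 0 := by
    simp only [abs_of_nonneg (sub_nonneg.2 (hu (Nat.le_succ _))), Finset.sum_range_sub]
  rw [bvNorm, increments_eq, abs_of_nonneg (h0.trans (hu N.zero_le))]
  linarith

lemma bvNorm_comp_le_of_monotoneOn_Icc {f : ℝ → ℝ} {a b : ℝ} (hf : MonotoneOn f (Icc a b))
    (ha : 0 ≤ f a) {c : ℕ → ℝ} (hc : Monotone c) (hcab : ∀ n, c n ∈ Icc a b) (N : ℕ) :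
    bvNorm (f ∘ c) N ≤ 2 * f b := by
  have hab : a ≤ b := (hcab 0).1.trans (hcab 0).2
  have comp_monotone : Monotone (f ∘ c) := fun i j hij => hf (hcab i) (hcab j) (hc hij)
  have comp_nonneg : 0 ≤ f (c 0) := ha.trans (hf (left_mem_Icc.2 hab) (hcab 0) (hcab 0).1)
  have comp_le : f (c N) ≤ f b := hf (hcab N) (right_mem_Icc.2 hab) (hcab N).2
  exact (bvNorm_le_of_monotone comp_monotone comp_nonneg N).trans (by gcongr; exact comp_le)

lemma bvNorm_pow_le_two {c : ℕ → ℝ} (hc : Monotone c) (hc01 : ∀ n, c n ∈ Icc (0 : ℝ) 1)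
    (n N : ℕ) : bvNorm (c ^ n) N ≤ 2 := by
  have pow_monotoneOn : MonotoneOn (fun t : ℝ => t ^ n) (Icc 0 1) :=
    fun s hs t _ hst => pow_le_pow_left₀ hs.1 hst n
  exact (bvNorm_comp_le_of_monotoneOn_Icc pow_monotoneOn (pow_nonneg le_rfl n) hc hc01 N).trans_eq
    (by rw [one_pow, mul_one])

lemma monotoneOn_succ_mul_pow_sub_mul_pow_succ (n : ℕ) :
    MonotoneOn (fun t : ℝ => (n + 1) * t ^ n - n * t ^ (n + 1)) (Icc 0 1) := by
  have hasDerivAt (t : ℝ) : HasDerivAt (fun t : ℝ => ((n : ℝ) + 1) * t ^ n - n * t ^ (n + 1))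
      (n * (n + 1) * (t ^ (n - 1) * (1 - t))) t := by
    refine (((hasDerivAt_pow n t).const_mul ((n : ℝ) + 1)).sub
      ((hasDerivAt_pow (n + 1) t).const_mul (n : ℝ))).congr_deriv ?_
    cases n
    · simp
    · simp only [Nat.add_sub_cancel]
      push_cast
      ring
  refine monotoneOn_of_deriv_nonneg (convex_Icc 0 1) (by fun_prop) (by fun_prop) fun t ht => ?_
  rw [interior_Icc] at ht
  have one_sub_nonneg : 0 ≤ 1 - t := sub_nonneg.2 ht.2.le
  have t_nonneg : 0 ≤ t := ht.1.le
  rw [(hasDerivAt t).deriv]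
  positivity

lemma bvNorm_natCast_smul_pow_mul_one_sub_le_four {c : ℕ → ℝ} (hc : Monotone c)
    (hc01 : ∀ n, c n ∈ Icc (0 : ℝ) 1) (n N : ℕ) :
    bvNorm ((n : ℝ) • (c ^ n * (1 - c))) N ≤ 4 := by
  have eq_sub : (n : ℝ) • (c ^ n * (1 - c)) =
      (fun t : ℝ => (n + 1) * t ^ n - n * t ^ (n + 1)) ∘ c - c ^ n := by
    ext m
    simp only [Pi.smul_apply, Pi.mul_apply, Pi.pow_apply, Pi.sub_apply, Pi.one_apply, smul_eq_mul,
      Function.comp_apply]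
    ring
  have nonneg_at_zero : (0 : ℝ) ≤ (n + 1) * 0 ^ n - n * 0 ^ (n + 1) := by
    rw [zero_pow n.succ_ne_zero, mul_zero, sub_zero]
    positivity
  have increasing_part_le := bvNorm_comp_le_of_monotoneOn_Icc
    (monotoneOn_succ_mul_pow_sub_mul_pow_succ n) nonneg_at_zero hc hc01 N
  rw [eq_sub]
  refine (bvNorm_sub_le _ _ N).trans ?_
  have pow_le := bvNorm_pow_le_two hc hc01 n N
  simp only [one_pow, mul_one, add_sub_cancel_left] at increasing_part_le
  linarith

/-- `S` is the multiplier `M_c` of the decomposition `p`, expressed through its components; for a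
Schauder decomposition this amounts to `S x = ∑ n, c n • p n x` for every `x`. -/
def IsMultiplier (p : ℕ → X →L[ℂ] X) (c : ℕ → ℝ) (S : X →L[ℂ] X) : Prop :=
  ∀ n x, p n (S x) = c n • p n x

namespace IsMultiplier

variable {p : ℕ → X →L[ℂ] X} {c d : ℕ → ℝ} {S R : X →L[ℂ] X}

lemma one : IsMultiplier p 1 1 := fun n x => by simp

lemma mul (hS : IsMultiplier p c S) (hR : IsMultiplier p d R) : IsMultiplier p (c * d) (S * R) :=
  fun n x => by rw [mul_apply_eq_comp, hS, hR, smul_smul, Pi.mul_apply]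

lemma pow (hS : IsMultiplier p c S) (n : ℕ) : IsMultiplier p (c ^ n) (S ^ n) := by
  induction n with
  | zero => simpa only [pow_zero] using one
  | succ n ih => simpa only [pow_succ] using ih.mul hS

lemma sub (hS : IsMultiplier p c S) (hR : IsMultiplier p d R) : IsMultiplier p (c - d) (S - R) :=
  fun n x => by rw [sub_apply, map_sub, hS, hR, Pi.sub_apply, sub_smul]

lemma natCast_smul (hS : IsMultiplier p c S) (m : ℕ) :
    IsMultiplier p ((m : ℝ) • c) ((m : ℂ) • S) :=
  fun n x => by simp [hS n x, mul_smul, Nat.cast_smul_eq_nsmul]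

end IsMultiplier

lemma IsSchauderDecomposition.isMultiplier_of_tendsto {p : ℕ → X →L[ℂ] X}
    (hp : IsSchauderDecomposition p) {c : ℕ → ℝ} {S : X →L[ℂ] X}
    (hS : ∀ x, Tendsto (fun N => ∑ n ∈ Finset.range N, ((c n : ℝ) : ℂ) • p n x) atTop (𝓝 (S x))) :
    IsMultiplier p c S := by
  obtain ⟨idempotent, orthogonal, -⟩ := hp
  intro m x
  have component_eq (n : ℕ) : p m (p n x) = if n = m then p m x else 0 := by
    split_ifs with h
    · exact h ▸ DFunLike.congr_fun (idempotent n) x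
    · exact DFunLike.congr_fun (orthogonal m n (Ne.symm h)) x
  refine tendsto_nhds_unique (((p m).continuous.tendsto (S x)).comp (hS x)) ?_
  refine tendsto_const_nhds.congr' ?_
  filter_upwards [eventually_gt_atTop m] with N hN
  simp [component_eq, hN]

theorem IsSchauderDecomposition.isRBounded_setOf_isMultiplier {p : ℕ → X →L[ℂ] X}
    (hp : IsSchauderDecomposition p)
    (hR : IsRBounded (range fun N : ℕ => partialSum p (N + 1))) (B : ℝ) :
    IsRBounded {S : X →L[ℂ] X | ∃ u, IsMultiplier p u S ∧ ∀ N, bvNorm u N ≤ B} := by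
  refine hR.of_mem_smul_closedAbsConvexHull B ?_
  rintro S ⟨u, hS, hu⟩ x
  set H := closedAbsConvexHull ℝ ((fun T : X →L[ℂ] X => T x) '' range fun N => partialSum p (N + 1))
  have H_absConvex : AbsConvex ℝ H := absConvex_convexClosedHull
  have smul_H_closed : IsClosed (B • H) := isClosedMap_smul₀ B _ isClosed_closedAbsConvexHull
  have partialSum_mem (N : ℕ) : ∑ n ∈ Finset.range (N + 1), p n x ∈ H :=
    subset_closedAbsConvexHull ⟨_, ⟨N, rfl⟩, by simp [partialSum]⟩
  have tendsto_S := (tendsto_add_atTop_iff_nat 1).2 (hp.2.2 (S x))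
  refine smul_H_closed.mem_of_tendsto tendsto_S (Eventually.of_forall fun N => ?_)
  have bvNorm_nonneg : 0 ≤ bvNorm u N := by unfold bvNorm; positivity
  have bvNorm_smul_subset : bvNorm u N • H ⊆ B • H :=
    H_absConvex.1.smul_mono (abs_le_abs_of_nonneg bvNorm_nonneg (hu N))
  simpa only [hS _ x] using
    bvNorm_smul_subset (sum_smul_mem_bvNorm_smul H_absConvex partialSum_mem u N)

end

theorem statement2_general {X : Type*} [NormedAddCommGroup X] [NormedSpace ℂ X]
    (p : ℕ → X →L[ℂ] X) (hp : IsSchauderDecomposition p)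
    (hR : IsRBounded (Set.range fun N : ℕ => partialSum p (N + 1)))
    (c : ℕ → ℝ) (hc : Monotone c) (hc01 : ∀ n, c n ∈ Set.Icc (0 : ℝ) 1)
    (T : X →L[ℂ] X)
    (hT : ∀ x : X, Tendsto (fun N => ∑ n ∈ Finset.range N, ((c n : ℝ) : ℂ) • p n x)
      atTop (nhds (T x))) :
    IsRBounded (Set.range fun n : ℕ => T ^ n) ∧
    IsRBounded {S : X →L[ℂ] X | ∃ n : ℕ, 1 ≤ n ∧ S = (n : ℂ) • (T ^ n * (1 - T))} := by
  have T_isMultiplier : IsMultiplier p c T := hp.isMultiplier_of_tendsto hT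
  constructor
  · refine (hp.isRBounded_setOf_isMultiplier hR 2).mono ?_
    rintro _ ⟨n, rfl⟩
    exact ⟨c ^ n, T_isMultiplier.pow n, bvNorm_pow_le_two hc hc01 n⟩
  · refine (hp.isRBounded_setOf_isMultiplier hR 4).mono ?_
    rintro _ ⟨n, -, rfl⟩
    exact ⟨(n : ℝ) • (c ^ n * (1 - c)),
      ((T_isMultiplier.pow n).mul (.sub .one T_isMultiplier)).natCast_smul n,
      bvNorm_natCast_smul_pow_mul_one_sub_le_four hc hc01 n⟩

/-- For an `R`-Schauder decomposition, any multiplier `T = M_c` associated with a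
nondecreasing sequence `0 < c_n < 1` is `R`-Ritt. -/
theorem statement2 {X : Type*} [NormedAddCommGroup X] [NormedSpace ℂ X] [CompleteSpace X]
    (p : ℕ → X →L[ℂ] X) (hp : IsSchauderDecomposition p)
    (hR : IsRBounded (Set.range fun N : ℕ => partialSum p (N + 1)))
    (c : ℕ → ℝ) (hc : Monotone c) (hc01 : ∀ n, 0 < c n ∧ c n < 1)
    (T : X →L[ℂ] X)
    (hT : ∀ x : X, Tendsto (fun N => ∑ n ∈ Finset.range N, ((c n : ℝ) : ℂ) • p n x)
      atTop (nhds (T x))) :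
    IsRBounded (Set.range fun n : ℕ => T ^ n) ∧
    IsRBounded {S : X →L[ℂ] X | ∃ n : ℕ, 1 ≤ n ∧ S = (n : ℂ) • (T ^ n * (1 - T))} := by
  exact statement2_general p hp hR c hc (fun n => ⟨(hc01 n).1.le, (hc01 n).2.le⟩) T hT
end

section
/- Let X be a complex Banach space, let 0 < ω < θ < π, and let A ∈ B(X) be an invertible bounded operator with spectrum σ(A) ⊆ closure(Σ_ω), such that the set {λ (λ I − A)^{-1} : λ ∈ ℂ ∖ closure(Σ_θ)} is R-bounded. Then σ(A^{-1}) ⊆ closure(Σ_ω), and the set {λ (λ I − A^{-1})^{-1} : λ ∈ ℂ ∖ closure(Σ_θ)} is also R-bounded. -/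
open Filter Topology NormedSpace

/-- The open sector `Σ_θ = {λ ∈ ℂ∖{0} : |Arg λ| < θ}`. -/
def sector (θ : ℝ) : Set ℂ := {z : ℂ | z ≠ 0 ∧ |Complex.arg z| < θ}

/-!
Writing `R(λ, A) = (λ - A)⁻¹`, the point is the identity
`λ R(λ, A⁻¹) = 1 - λ⁻¹ R(λ⁻¹, A)`. Inversion preserves sectors, so for `λ` outside a closed sector
the right-hand side is the identity minus an operator `μ R(μ, A)` with `μ = λ⁻¹` outside the same
sector, and a difference of two `R`-bounded families is `R`-bounded.
-/

open scoped Pointwise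

section Algebra

theorem inverse_one_sub_inv {R : Type*} [Ring R] {u : Rˣ} (hu : IsUnit (1 - (u : R))) :
    Ring.inverse (1 - (↑u⁻¹ : R)) = 1 - Ring.inverse (1 - (u : R)) := by
  obtain ⟨v, hv⟩ := hu
  have factor : 1 - (↑u⁻¹ : R) = ↑(-u⁻¹ * v) := by
    simp [hv, mul_sub]
  have hu_eq : (u : R) = 1 - v := by rw [hv]; abel
  rw [factor, ← hv, Ring.inverse_unit, Ring.inverse_unit]
  simp [hu_eq, mul_sub]

theorem smul_resolvent_inv {R A : Type*} [CommRing R] [Ring A] [Algebra R A] {r : Rˣ} {a : Aˣ}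
    (h : (↑r⁻¹ : R) ∈ resolventSet R (a : A)) :
    r • resolvent (↑a⁻¹ : A) (r : R) = 1 - r⁻¹ • resolvent (a : A) (↑r⁻¹ : R) := by
  have h_unit : IsUnit (1 - (↑(r • a) : A)) := by
    have h_smul : IsUnit (r • (algebraMap R A ↑r⁻¹ - (a : A))) :=
      (isUnit_smul_iff r _).mpr (spectrum.mem_resolventSet_iff.mp h)
    simpa [smul_sub, Algebra.algebraMap_eq_smul_one, Units.smul_def, smul_smul] using h_smul
  rw [spectrum.units_smul_resolvent_self, spectrum.units_smul_resolvent_self]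
  simpa [resolvent, smul_inv] using inverse_one_sub_inv h_unit

/-- The elements `r • (r - a)⁻¹` with `r` outside `s`. For an operator `a` and a closed sector `s`,
this is the family whose `R`-boundedness expresses `R`-sectoriality. Scalars `r` in the spectrum
contribute `0`, the junk value of `resolvent`. -/
def scaledResolvents {R A : Type*} [CommRing R] [Ring A] [Algebra R A] (a : A) (s : Set R) :
    Set A :=
  {b | ∃ r : R, r ∉ s ∧ b = r • resolvent a r}

variable {𝕜 A : Type*} [Field 𝕜] [Ring A] [Algebra 𝕜 A] {a : Aˣ} {s : Set 𝕜}

theorem spectrum_inv_subset (hs : Set.MapsTo Inv.inv s s) (ha : spectrum 𝕜 (a : A) ⊆ s) :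
    spectrum 𝕜 (↑a⁻¹ : A) ⊆ s := by
  rw [← spectrum.map_inv]
  intro r hr
  simpa using hs (ha hr)

theorem scaledResolvents_inv_subset (hs : Set.MapsTo Inv.inv s s) (h0 : 0 ∈ s)
    (ha : spectrum 𝕜 (a : A) ⊆ s) :
    scaledResolvents (↑a⁻¹ : A) s ⊆ {1} - scaledResolvents (a : A) s := by
  rintro _ ⟨r, hr, rfl⟩
  have hr_inv : r⁻¹ ∉ s := fun h => hr (by simpa using hs h)
  lift r to 𝕜ˣ using (ne_of_mem_of_not_mem h0 hr).symm.isUnit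
  rw [← Units.val_inv_eq_inv_val] at hr_inv
  have h_res : (↑r⁻¹ : 𝕜) ∈ resolventSet 𝕜 (a : A) :=
    spectrum.notMem_iff.mp fun h => hr_inv (ha h)
  exact ⟨1, rfl, _, ⟨_, hr_inv, rfl⟩, (smul_resolvent_inv h_res).symm⟩

end Algebra

section Sector

theorem mapsTo_inv_closure {G : Type*} [GroupWithZero G] [TopologicalSpace G]
    [ContinuousInv₀ G] {s : Set G} (hs : Set.MapsTo Inv.inv s s) :
    Set.MapsTo Inv.inv (closure s) (closure s) := by
  intro z hz
  rcases eq_or_ne z 0 with rfl | hz0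
  · simpa using hz
  · exact closure_mono hs.image_subset
      ((continuousAt_inv₀ hz0).continuousWithinAt.mem_closure_image hz)

theorem mapsTo_inv_sector (θ : ℝ) : Set.MapsTo Inv.inv (sector θ) (sector θ) :=
  fun z ⟨hz0, hz⟩ => ⟨inv_ne_zero hz0, (Complex.abs_arg_inv z).trans_lt hz⟩

theorem sector_mono : Monotone sector :=
  fun _ _ h _ ⟨hz0, hz⟩ => ⟨hz0, hz.trans_le h⟩

theorem ofReal_mem_sector {θ r : ℝ} (hθ : 0 < θ) (hr : 0 < r) : (r : ℂ) ∈ sector θ :=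
  ⟨Complex.ofReal_ne_zero.mpr hr.ne', by rwa [Complex.arg_ofReal_of_nonneg hr.le, abs_zero]⟩

theorem zero_mem_closure_sector {θ : ℝ} (hθ : 0 < θ) : (0 : ℂ) ∈ closure (sector θ) := by
  have h0 : (0 : ℝ) ∈ closure (Set.Ioi 0) := by simp [closure_Ioi]
  rw [← Complex.ofReal_zero]
  exact map_mem_closure Complex.continuous_ofReal h0 fun _ hr => ofReal_mem_sector hθ hr

end Sector

section RBounded

variable {X : Type*} [NormedAddCommGroup X] [NormedSpace ℂ X]

theorem signAvg_sub_le (k : ℕ) (v w : Fin k → X) :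
    signAvg k (fun j => v j - w j) ≤ signAvg k v + signAvg k w := by
  unfold signAvg
  rw [← mul_add, ← Finset.sum_add_distrib]
  refine mul_le_mul_of_nonneg_left (Finset.sum_le_sum fun ε _ => ?_) (by positivity)
  simp only [smul_sub, Finset.sum_sub_distrib]
  exact norm_sub_le _ _

theorem signAvg_map_le (T : X →L[ℂ] X) (k : ℕ) (v : Fin k → X) :
    signAvg k (fun j => T (v j)) ≤ ‖T‖ * signAvg k v := by
  unfold signAvg
  rw [mul_left_comm, Finset.mul_sum _ _ ‖T‖]
  gcongr with ε
  simpa only [map_sum, ContinuousLinearMap.map_smul_of_tower] using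
    T.le_opNorm (∑ j, (if ε j then (1 : ℝ) else -1) • v j)

theorem isRBounded_singleton (T : X →L[ℂ] X) : IsRBounded {T} := by
  refine ⟨‖T‖, norm_nonneg T, fun k S x hS => ?_⟩
  obtain rfl : S = fun _ => T := funext hS
  exact signAvg_map_le T k x

namespace IsRBounded

variable {F G : Set (X →L[ℂ] X)}

theorem mono_s4 (hG : IsRBounded G) (hFG : F ⊆ G) : IsRBounded F := by
  obtain ⟨C, hC, hG⟩ := hG
  exact ⟨C, hC, fun k T x hT => hG k T x fun j => hFG (hT j)⟩

theorem sub (hF : IsRBounded F) (hG : IsRBounded G) : IsRBounded (F - G) := by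
  obtain ⟨C, hC, hF⟩ := hF
  obtain ⟨D, hD, hG⟩ := hG
  refine ⟨C + D, add_nonneg hC hD, fun k T x hT => ?_⟩
  choose S hS R hR hSR using hT
  obtain rfl : (fun j => S j - R j) = T := funext hSR
  calc signAvg k (fun j => (S j - R j) (x j))
      ≤ signAvg k (fun j => S j (x j)) + signAvg k (fun j => R j (x j)) := signAvg_sub_le k _ _
    _ ≤ C * signAvg k x + D * signAvg k x := add_le_add (hF k S x hS) (hG k R x hR)
    _ = (C + D) * signAvg k x := (add_mul _ _ _).symm

end IsRBounded

end RBounded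

theorem statement4_general {X : Type*} [NormedAddCommGroup X] [NormedSpace ℂ X]
    {ω θ : ℝ} (hθ : 0 < θ) (hωθ : ω ≤ θ)
    {A B : X →L[ℂ] X} (hAB : A * B = 1) (hBA : B * A = 1)
    (hspec : spectrum ℂ A ⊆ closure (sector ω))
    (hRb : IsRBounded (scaledResolvents A (closure (sector θ)))) :
    spectrum ℂ B ⊆ closure (sector ω) ∧
    IsRBounded (scaledResolvents B (closure (sector θ))) := by
  let a : (X →L[ℂ] X)ˣ := ⟨A, B, hAB, hBA⟩
  have h_inv (φ : ℝ) := mapsTo_inv_closure (mapsTo_inv_sector φ)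
  have hspec_θ : spectrum ℂ A ⊆ closure (sector θ) :=
    hspec.trans (closure_mono (sector_mono hωθ))
  have h_sub : scaledResolvents B (closure (sector θ)) ⊆
      {1} - scaledResolvents A (closure (sector θ)) :=
    scaledResolvents_inv_subset (a := a) (h_inv θ) (zero_mem_closure_sector hθ) hspec_θ
  exact ⟨spectrum_inv_subset (a := a) (h_inv ω) hspec,
    ((isRBounded_singleton 1).sub hRb).mono_s4 h_sub⟩

/-- If an invertible bounded operator `A` (with inverse `B`) has spectrum in
`closure Σ_ω` and `R`-bounded resolvent set off `closure Σ_θ`, the same holds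
for its inverse. -/
theorem statement4 {X : Type*} [NormedAddCommGroup X] [NormedSpace ℂ X] [CompleteSpace X]
    (ω θ : ℝ) (hω : 0 < ω) (hωθ : ω < θ) (hθ : θ < Real.pi)
    (A B : X →L[ℂ] X) (hAB : A * B = 1) (hBA : B * A = 1)
    (hspec : spectrum ℂ A ⊆ closure (sector ω))
    (hRb : IsRBounded {S : X →L[ℂ] X | ∃ lam : ℂ, lam ∉ closure (sector θ) ∧
      S = lam • Ring.inverse (algebraMap ℂ (X →L[ℂ] X) lam - A)}) :
    spectrum ℂ B ⊆ closure (sector ω) ∧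
    IsRBounded {S : X →L[ℂ] X | ∃ lam : ℂ, lam ∉ closure (sector θ) ∧
      S = lam • Ring.inverse (algebraMap ℂ (X →L[ℂ] X) lam - B)} :=
  statement4_general (hω.trans hωθ) hωθ.le hAB hBA hspec hRb
end
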